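/- Let d : ℕ, let Σ be a real symmetric positive semidefinite d×d matrix, let β : ℝ → ℝ be continuous with β s > 0 for all s, and set B t = ∫_0^t β s ds and Σ_t = exp(−2·B t)·Σ + (1 − exp(−2·B t))·I. Then for every t > 0, writing sqrt for the positive semidefinite matrix square root, the map t ↦ sqrt(Σ_t) has derivative β t • ((I − Σ_t) * (sqrt(Σ_t))⁻¹) at t, i.e. HasDerivAt (fun t => sqrt(Σ_t)) ((β t) • ((I − Σ_t) * (sqrt(Σ_t))⁻¹)) t. -/

import Mathlib

open Matrix

attribute [local instance] Matrix.normedAddCommGroup Matrix.normedSpace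

open scoped ComplexOrder in
/-- The positive semidefinite square root of a positive semidefinite matrix
(the definition of the older Mathlib, since removed). -/
noncomputable def Matrix.PosSemidef.sqrt {n 𝕜 : Type*} [Fintype n] [RCLike 𝕜] [DecidableEq n]
    {A : Matrix n n 𝕜} (hA : A.PosSemidef) : Matrix n n 𝕜 :=
  hA.1.eigenvectorUnitary.1 * diagonal ((↑) ∘ Real.sqrt ∘ hA.1.eigenvalues) *
    (star hA.1.eigenvectorUnitary : Matrix n n 𝕜)

/-- The unique positive semidefinite square root of a positive semidefinite real matrix
(extended by `0` to non-positive-semidefinite matrices). -/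
noncomputable def psdSqrt {d : ℕ} (M : Matrix (Fin d) (Fin d) ℝ) : Matrix (Fin d) (Fin d) ℝ :=
  open scoped Classical in
  if h : M.PosSemidef then h.sqrt else 0

section Helpers

/-- Conjugated diagonal matrices multiply entrywise. -/
theorem conjDiag_mul {d : ℕ} (V : Matrix (Fin d) (Fin d) ℝ) (hV : star V * V = 1)
    (f g : Fin d → ℝ) :
    (V * diagonal f * star V) * (V * diagonal g * star V)
      = V * diagonal (fun i => f i * g i) * star V := by
  calc (V * diagonal f * star V) * (V * diagonal g * star V)
      = V * diagonal f * (star V * V) * diagonal g * star V := by simp only [Matrix.mul_assoc]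
    _ = V * (diagonal f * diagonal g) * star V := by rw [hV]; simp only [Matrix.mul_assoc, Matrix.one_mul]
    _ = _ := by rw [diagonal_mul_diagonal]

theorem conjDiag_posSemidef {d : ℕ} (V : Matrix (Fin d) (Fin d) ℝ)
    (f : Fin d → ℝ) (hf : ∀ i, 0 ≤ f i) : (V * diagonal f * star V).PosSemidef :=
  (PosSemidef.diagonal (d := f) hf).mul_mul_conjTranspose_same V

theorem spectral_form {d : ℕ} {S : Matrix (Fin d) (Fin d) ℝ} (hS : S.IsHermitian) :
    S = (hS.eigenvectorUnitary : Matrix (Fin d) (Fin d) ℝ) * diagonal hS.eigenvalues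
      * star (hS.eigenvectorUnitary : Matrix (Fin d) (Fin d) ℝ) := by
  have h := hS.spectral_theorem
  rw [Unitary.conjStarAlgAut_apply] at h
  exact h

open scoped MatrixOrder in
theorem psd_eq_of_sq {d : ℕ} {A C : Matrix (Fin d) (Fin d) ℝ} (hA : A.PosSemidef)
    (hC : C.PosSemidef) (h : A * A = C * C) : A = C :=
  (CFC.mul_self_eq_mul_self_iff A C hA.nonneg hC.nonneg).1 h

theorem psdSqrt_conjDiag {d : ℕ} (V : Matrix (Fin d) (Fin d) ℝ) (hV : star V * V = 1)
    (f : Fin d → ℝ) (hf : ∀ i, 0 ≤ f i) :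
    psdSqrt (V * diagonal f * star V) = V * diagonal (fun i => Real.sqrt (f i)) * star V := by
  have hP := conjDiag_posSemidef V f hf
  have h1 : psdSqrt (V * diagonal f * star V) = hP.sqrt := by
    unfold psdSqrt
    rw [dif_pos hP]
  have h2 : hP.sqrt = (hP.1.eigenvectorUnitary : Matrix (Fin d) (Fin d) ℝ)
      * diagonal (fun i => Real.sqrt (hP.1.eigenvalues i))
      * star (hP.1.eigenvectorUnitary : Matrix (Fin d) (Fin d) ℝ) := rfl
  rw [h1, h2]
  apply psd_eq_of_sq
  · exact conjDiag_posSemidef _ _ fun i => Real.sqrt_nonneg _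
  · exact conjDiag_posSemidef _ _ fun i => Real.sqrt_nonneg _
  · rw [conjDiag_mul _ (Unitary.coe_star_mul_self _), conjDiag_mul _ hV]
    simp only [Real.mul_self_sqrt (hf _), Real.mul_self_sqrt (hP.eigenvalues_nonneg _)]
    exact (spectral_form hP.1).symm

/-- `f ↦ V diag(f) V*` as a linear map. -/
noncomputable def conjDiagLin {d : ℕ} (V : Matrix (Fin d) (Fin d) ℝ) :
    (Fin d → ℝ) →ₗ[ℝ] Matrix (Fin d) (Fin d) ℝ where
  toFun f := V * diagonal f * star V
  map_add' f g := by
    rw [← Matrix.add_mul, ← Matrix.mul_add, diagonal_add]; rfl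
  map_smul' c f := by
    rw [diagonal_smul]; simp

theorem conjDiag_hasDerivAt {d : ℕ} (V : Matrix (Fin d) (Fin d) ℝ)
    (f : ℝ → Fin d → ℝ) (f' : Fin d → ℝ) (t : ℝ)
    (hf : ∀ i, HasDerivAt (fun u => f u i) (f' i) t) :
    HasDerivAt (fun u => V * diagonal (f u) * star V) (V * diagonal f' * star V) t := by
  have h := (LinearMap.toContinuousLinearMap (conjDiagLin V)).hasFDerivAt.comp_hasDerivAt t
    (hasDerivAt_pi.2 hf)
  exact h

end Helpers

/-- Derivative of the square root of the forward covariance: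
`d[Σ_t^{1/2}] = β t (I - Σ_t) Σ_t^{-1/2} dt` for `t > 0` (key tool for Proposition 3). -/
theorem forward_covariance_sqrt_deriv
    (d : ℕ) (S : Matrix (Fin d) (Fin d) ℝ)
    (hS_sym : S.IsSymm) (hS_psd : S.PosSemidef)
    (β : ℝ → ℝ) (hβ : Continuous β) (hβpos : ∀ s, 0 < β s)
    (B : ℝ → ℝ) (hB : ∀ t, B t = ∫ s in (0:ℝ)..t, β s)
    (St : ℝ → Matrix (Fin d) (Fin d) ℝ)
    (hSt : ∀ t, St t = Real.exp (-2 * B t) • S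
      + (1 - Real.exp (-2 * B t)) • (1 : Matrix (Fin d) (Fin d) ℝ))
    (t : ℝ) (ht : 0 < t) :
    HasDerivAt (fun u => psdSqrt (St u))
      ((β t) • (((1 : Matrix (Fin d) (Fin d) ℝ) - St t) * (psdSqrt (St t))⁻¹)) t := by
  have hH := hS_psd.1
  obtain ⟨V, lam, hV, hV', hlam, hSV⟩ : ∃ (V : Matrix (Fin d) (Fin d) ℝ) (lam : Fin d → ℝ),
      star V * V = 1 ∧ V * star V = 1 ∧ (∀ i, 0 ≤ lam i) ∧ S = V * diagonal lam * star V :=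
    ⟨hH.eigenvectorUnitary, hH.eigenvalues, Unitary.coe_star_mul_self _,
      Unitary.coe_mul_star_self _, hS_psd.eigenvalues_nonneg, spectral_form hH⟩
  have hone : (1 : Matrix (Fin d) (Fin d) ℝ) = conjDiagLin V 1 := by
    change _ = V * diagonal (fun _ => 1) * star V
    rw [diagonal_one, Matrix.mul_one, hV']
  have hS' : S = conjDiagLin V lam := hSV
  let g : ℝ → Fin d → ℝ := fun u i => Real.exp (-2 * B u) * lam i + (1 - Real.exp (-2 * B u))
  have hStg : ∀ u, St u = conjDiagLin V (g u) := by
    intro u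
    rw [hSt, hone, hS', ← map_smul, ← map_smul, ← map_add]
    congr 1
    ext i
    simp [g]
  have hBpos : ∀ u, 0 < u → 0 < B u := by
    intro u hu
    rw [hB]
    exact intervalIntegral.intervalIntegral_pos_of_pos (hβ.intervalIntegrable _ _) hβpos hu
  have hgpos : ∀ u, 0 < u → ∀ i, 0 < g u i := by
    intro u hu i
    have h1 : Real.exp (-2 * B u) < 1 := by rw [← Real.exp_zero]; exact Real.exp_lt_exp.2 (by linarith [hBpos u hu])
    have h2 := mul_nonneg (Real.exp_pos (-2 * B u)).le (hlam i)
    simp only [g]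
    linarith
  have hsq : ∀ u, 0 < u → psdSqrt (St u) = V * diagonal (fun i => Real.sqrt (g u i)) * star V := by
    intro u hu
    rw [hStg]
    exact psdSqrt_conjDiag V hV _ fun i => (hgpos u hu i).le
  have hB' : HasDerivAt B (β t) t := by
    rw [funext hB]
    exact intervalIntegral.integral_hasDerivAt_right (hβ.intervalIntegrable _ _)
      (hβ.stronglyMeasurableAtFilter _ _) hβ.continuousAt
  have hg' : ∀ i, HasDerivAt (fun u => g u i) (2 * β t * (1 - g t i)) t := by
    intro i
    have he := (hB'.const_mul (-2)).exp
    have h := (he.mul_const (lam i)).add (he.const_sub 1)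
    refine h.congr_deriv ?_
    simp only [g]
    ring
  have hinv : (psdSqrt (St t))⁻¹ = V * diagonal (fun i => (Real.sqrt (g t i))⁻¹) * star V := by
    rw [hsq t ht]
    apply Matrix.inv_eq_right_inv
    rw [conjDiag_mul V hV, hone]
    change _ = V * diagonal (fun _ => 1) * star V
    congr 3
    ext i
    exact mul_inv_cancel₀ (Real.sqrt_pos.2 (hgpos t ht i)).ne'
  have hval : (β t) • (((1 : Matrix (Fin d) (Fin d) ℝ) - St t) * (psdSqrt (St t))⁻¹)
      = V * diagonal (fun i => 2 * β t * (1 - g t i) / (2 * Real.sqrt (g t i))) * star V := by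
    rw [hinv, hStg, hone, ← map_sub]
    change β t • ((V * diagonal (1 - g t) * star V) * _) = _
    rw [conjDiag_mul V hV]
    change β t • conjDiagLin V _ = conjDiagLin V _
    rw [← map_smul]
    congr 1
    ext i
    simp only [Pi.smul_apply, Pi.sub_apply, Pi.one_apply, smul_eq_mul]
    have := (Real.sqrt_pos.2 (hgpos t ht i)).ne'
    field_simp
  rw [hval]
  refine HasDerivAt.congr_of_eventuallyEq
    (conjDiag_hasDerivAt V (fun u i => Real.sqrt (g u i)) _ t
      fun i => (hg' i).sqrt (hgpos t ht i).ne') ?_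
  filter_upwards [lt_mem_nhds ht] with u hu
  exact hsq u hu
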